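/- Let T = (T_1, …, T_n) be a Beurling tuple on a complex Hilbert space H, let j ∈ {1, …, n}, and let P_1 ⊆ P_2 ⊆ {1, …, n} \ {j}. Then D²_{j,T,P_2} ≤ D²_{j,T,P_1} in the ordering of self-adjoint operators (and hence, by operator monotonicity of the square root, D_{j,T,P_2} ≤ D_{j,T,P_1}). -/

import Mathlib

/-!
A Szegő tuple `T` on `H` dilates to the tuple of coordinate shifts on `K = ℓ²(ℕⁿ, H)`. With
`D*D = 𝕊ₙ⁻¹(T, T*)`, the map `J h = (D T^{*α} h)_α` satisfies `J Tᵢ* = Vᵢ* J`, where the `Vᵢ` are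
doubly commuting isometries. It is isometric because the sum of `T^α 𝕊ₙ⁻¹(T, T*) T^{*α}` over the
box `{0, …, m-1}ⁿ` telescopes to `∏ᵢ (I − Δ_{Tᵢ}^m)(I)`, and this tends strongly to `I` since every
`Tᵢ` is of class `C_{·0}` (`sum_box`, `tendsto_boxDefect`, `hasSum_norm_sq`, `exists_dilation`).

Let `S = I − J J*`, the projection onto a subspace of `K` invariant under every `Vᵢ`. Since
`(S Vᵢ J)* (S Vᵢ J) = I − Tᵢ*Tᵢ`, the Beurling condition says `(S Vᵢ J)(S Vⱼ J)* = 0` for `i ≠ j`,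
which is exactly what makes the restrictions `Vᵢ S` doubly commute, as in Mandrekar's theorem.
For doubly commuting `Vᵢ S`, the operator `∏_{k ∈ L} (I − Δ_{V_k})(S)` is a product of commuting
projections (`isStarProjection_applyDelta`). From
`I − Tⱼ*Tⱼ = J* Vⱼ* (S − Vⱼ S Vⱼ*) Vⱼ J` one gets, for `j ∉ P`,
`D²_{j,T,P} = J* Vⱼ* [∏_{k ∈ P ∪ {j}} (I − Δ_{V_k})(S)] Vⱼ J ≥ 0`
(`applyDelta_defect_nonneg_of_dilation`).

Monotonicity is then immediate: `D²_{j,T,P ∪ {k}} = D²_{j,T,P} − T_k D²_{j,T,P} T_k* ≤ D²_{j,T,P}`,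
and the square roots compare by operator monotonicity of the square root.
-/

open ContinuousLinearMap Filter Topology

variable {H : Type*} [NormedAddCommGroup H] [InnerProductSpace ℂ H] [CompleteSpace H]

/-- `T^k = T 0 ^ k 0 * T 1 ^ k 1 * ⋯` in increasing index order. -/
noncomputable def finPow {n : ℕ} (T : Fin n → H →L[ℂ] H) (k : Fin n → ℕ) : H →L[ℂ] H :=
  ((List.finRange n).map fun i => T i ^ k i).prod

/-- `𝕊ₙ⁻¹(T, T*) = ∑_{k ∈ {0,1}ⁿ} (−1)^{|k|} T^k T^{*k}`. -/
noncomputable def szegoInv {n : ℕ} (T : Fin n → H →L[ℂ] H) : H →L[ℂ] H :=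
  ∑ k : Fin n → Bool,
    ((-1 : ℂ) ^ (∑ i, if k i then 1 else 0)) •
      (finPow T (fun i => if k i then 1 else 0) *
        adjoint (finPow T (fun i => if k i then 1 else 0)))

/-- A Szegő tuple: commuting contractions, `𝕊ₙ⁻¹(T,T*) ≥ 0`, each `Tᵢ` of class `C_{·0}`. -/
structure IsSzegoTuple {n : ℕ} (T : Fin n → H →L[ℂ] H) : Prop where
  comm : ∀ i j, T i * T j = T j * T i
  contraction : ∀ i, ‖T i‖ ≤ 1
  pos : (szegoInv T).IsPositive
  pure : ∀ i (h : H), Tendsto (fun m : ℕ => (adjoint (T i) ^ m) h) atTop (𝓝 0)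

/-- A Beurling tuple: a Szegő tuple with `(I − Tᵢ*Tᵢ)(I − Tⱼ*Tⱼ) = 0` for `i ≠ j`. -/
def IsBeurlingTuple {n : ℕ} (T : Fin n → H →L[ℂ] H) : Prop :=
  IsSzegoTuple T ∧
    ∀ i j, i ≠ j → (1 - adjoint (T i) * T i) * (1 - adjoint (T j) * T j) = 0

/-- Apply `∏_{k ∈ L} (I − Δ_{T k})` to `A`, where `Δ_X(A) = X A X*`. -/
noncomputable def applyDelta {n : ℕ} (T : Fin n → H →L[ℂ] H) (L : List (Fin n))
    (A : H →L[ℂ] H) : H →L[ℂ] H :=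
  L.foldr (fun k B => B - T k * B * adjoint (T k)) A

/-- The truncated defect operator `D²_{j,T,P} = (∏_{k ∈ P} (I − Δ_{T k}))(I − Tⱼ*Tⱼ)`. -/
noncomputable def truncDefectSq {n : ℕ} (T : Fin n → H →L[ℂ] H) (j : Fin n)
    (P : Finset (Fin n)) : H →L[ℂ] H :=
  applyDelta T (P.sort (· ≤ ·)) (1 - adjoint (T j) * T j)

/-- `D²_{j,T} = D²_{j,T,P}` for `P = {1,…,n} \ {j}`. -/
noncomputable def jointDefectSq {n : ℕ} (T : Fin n → H →L[ℂ] H) (j : Fin n) : H →L[ℂ] H :=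
  truncDefectSq T j (Finset.univ.erase j)

/-- The `(i,j)`-th joint commutator `δᵢⱼ(T) = (∏_{k ∉ {i,j}} (I − Δ_{T k}))([Tⱼ, Tᵢ*])`. -/
noncomputable def jointComm {n : ℕ} (T : Fin n → H →L[ℂ] H) (i j : Fin n) : H →L[ℂ] H :=
  applyDelta T (((Finset.univ.erase i).erase j).sort (· ≤ ·))
    (T j * adjoint (T i) - adjoint (T i) * T j)

/-- Extend a multi-index supported on `P` by zero: gives `T_P^α` via `finPow`. -/
def extendSupport {n : ℕ} (P : Finset (Fin n)) (α : ↥P → ℕ) : Fin n → ℕ :=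
  fun i => if h : i ∈ P then α ⟨i, h⟩ else 0

/-! ### Defect operators of doubly commuting isometries -/

/-- Let `V` be an isometry and `B ≤ S` projections such that `V S` commutes with `B`. Then
`V B V* = (V S)(V S)* B` is a product of commuting projections, hence a subprojection of `B`. -/
theorem isStarProjection_step {A : Type*} [Ring A] [StarRing A] {V S B : A}
    (hS : IsStarProjection S) (hV : star V * V = 1)
    (hB : IsStarProjection B) (hSB : S * B = B) (hc : V * S * B = B * (V * S)) :
    IsStarProjection (B - V * B * star V) ∧ B - V * B * star V = B - V * S * (star (V * S) * B) := by
  have hSs : star S = S := hS.isSelfAdjoint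
  have hSS : S * S = S := hS.isIdempotentElem
  have hBs : star B = B := hB.isSelfAdjoint
  have hBB : B * B = B := hB.isIdempotentElem
  have hBS : B * S = B := by simpa [hSs, hBs] using congrArg star hSB
  have hc' : star (V * S) * B = B * star (V * S) := by
    simpa [hBs] using (congrArg star hc).symm
  have hR : star (V * S) * (V * S) = S := by
    rw [star_mul, hSs, mul_assoc, ← mul_assoc (star V), hV, one_mul, hSS]
  have hF : IsStarProjection (V * S * star (V * S)) := by
    refine ⟨?_, ?_⟩
    · change _ * _ = _
      rw [mul_assoc, ← mul_assoc (star (V * S)), hR, ← mul_assoc, mul_assoc V, hSS]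
    · simp [isSelfAdjoint_iff]
  have hFB : Commute (V * S * star (V * S)) B := by
    change _ * _ = _
    rw [mul_assoc, hc', ← mul_assoc, hc, mul_assoc]
  have h1 : V * B * star V = V * S * star (V * S) * B := by
    rw [mul_assoc _ _ B, hc', ← mul_assoc, mul_assoc V S B, hSB, star_mul, hSs, ← mul_assoc,
      mul_assoc V B S, hBS]
  rw [h1]
  refine ⟨(hF.mul hB hFB).sub_of_mul_eq_left hB ?_, by rw [mul_assoc]⟩
  rw [mul_assoc, hBB]

/-- If the isometries `Vᵢ` leave the range of the projection `S` invariant and their restrictions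
`Vᵢ S` doubly commute, then `∏_{k ∈ L} (I − Δ_{V_k})(S)` is a projection below `S`, and it commutes
with the remaining restrictions. -/
theorem isStarProjection_applyDelta {n : ℕ} (V : Fin n → H →L[ℂ] H) (S : H →L[ℂ] H)
    (hS : IsStarProjection S) (hiso : ∀ i, star (V i) * V i = 1)
    (hcomm : ∀ i j, V i * V j = V j * V i) (hinv : ∀ i, S * (V i * S) = V i * S)
    (hdc : ∀ i j, i ≠ j → V i * S * star (V j * S) = star (V j * S) * (V i * S))
    (L : List (Fin n)) (hL : L.Nodup) :
    IsStarProjection (applyDelta V L S) ∧ S * applyDelta V L S = applyDelta V L S ∧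
      ∀ k ∉ L, V k * S * applyDelta V L S = applyDelta V L S * (V k * S) := by
  induction L with
  | nil =>
    have hSS : S * S = S := hS.isIdempotentElem
    refine ⟨hS, hSS, fun k _ => ?_⟩
    change V k * S * S = S * (V k * S)
    rw [hinv, mul_assoc, hSS]
  | cons l L ih =>
    obtain ⟨hB, hSB, hc⟩ := ih hL.of_cons
    have hl : l ∉ L := (List.nodup_cons.1 hL).1
    have hstep := isStarProjection_step hS (hiso l) hB hSB (hc l hl)
    have hcons : applyDelta V (l :: L) S
        = applyDelta V L S - V l * applyDelta V L S * star (V l) := rfl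
    rw [hcons]
    generalize applyDelta V L S = B at *
    refine ⟨hstep.1, ?_, fun k hk => ?_⟩
    · rw [hstep.2, mul_sub, hSB, ← mul_assoc S, hinv]
    · have hkl : k ≠ l := fun h => hk (h ▸ List.mem_cons_self)
      have hkB := hc k fun h => hk (List.mem_cons_of_mem _ h)
      have h1 : V k * S * (V l * S) = V l * S * (V k * S) := by
        rw [mul_assoc, hinv, mul_assoc, hinv, ← mul_assoc, ← mul_assoc, hcomm]
      have h2 := hdc k l hkl
      rw [hstep.2, mul_sub, sub_mul, hkB]
      congr 1
      rw [← mul_assoc, h1, mul_assoc, ← mul_assoc _ _ B, h2, mul_assoc _ _ B, hkB]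
      simp only [mul_assoc]

/-- `∏_{k ∈ L} (I − Δ_{T_k})` of a compression to `H` is computed upstairs in the dilation space. -/
theorem applyDelta_intertwine {K : Type*} [NormedAddCommGroup K] [InnerProductSpace ℂ K]
    [CompleteSpace K] {n : ℕ} (T : Fin n → H →L[ℂ] H) (V : Fin n → K →L[ℂ] K) (J : H →L[ℂ] K)
    (hJT : ∀ i, J ∘L adjoint (T i) = adjoint (V i) ∘L J) (L : List (Fin n)) (Z : K →L[ℂ] K) :
    applyDelta T L (adjoint J ∘L Z ∘L J) = adjoint J ∘L applyDelta V L Z ∘L J := by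
  have hJT' : ∀ i, T i ∘L adjoint J = adjoint J ∘L V i := fun i => by
    simpa [adjoint_comp] using congrArg adjoint (hJT i)
  induction L with
  | nil => rfl
  | cons l L ih =>
    change applyDelta T L _ - T l * applyDelta T L _ * adjoint (T l) = adjoint J ∘L
      (applyDelta V L Z - V l * applyDelta V L Z * adjoint (V l)) ∘L J
    rw [ih]
    ext x
    have h1 := fun y => DFunLike.congr_fun (hJT' l) y
    have h2 := fun y => DFunLike.congr_fun (hJT l) y
    simp only [comp_apply] at h1 h2
    simp [h1, h2]

theorem applyDelta_conj {n : ℕ} (V : Fin n → H →L[ℂ] H) (j : Fin n) (W : H →L[ℂ] H)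
    (L : List (Fin n)) (h : ∀ k ∈ L, V k * star (V j) = star (V j) * V k) :
    applyDelta V L (star (V j) * W * V j) = star (V j) * applyDelta V L W * V j := by
  induction L with
  | nil => rfl
  | cons l L ih =>
    change applyDelta V L _ - V l * applyDelta V L _ * star (V l) = star (V j) *
      (applyDelta V L W - V l * applyDelta V L W * star (V l)) * V j
    rw [ih fun k hk => h k (List.mem_cons_of_mem _ hk)]
    have h1 := h l List.mem_cons_self
    have h2 : V j * star (V l) = star (V l) * V j := by simpa using congrArg star h1
    rw [mul_sub, sub_mul]
    congr 1
    simp only [← mul_assoc]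
    rw [h1]
    simp only [mul_assoc]
    rw [h2]

theorem applyDelta_leftComm {n : ℕ} (T : Fin n → H →L[ℂ] H) (hT : ∀ i j, T i * T j = T j * T i) :
    LeftCommutative (fun (k : Fin n) (B : H →L[ℂ] H) => B - T k * B * adjoint (T k)) where
  left_comm a b B := by
    have h2 : star (T a) * star (T b) = star (T b) * star (T a) := by
      simpa using congrArg star (hT b a)
    simp only [← star_eq_adjoint, mul_sub, sub_mul]
    have : T a * (T b * B * star (T b)) * star (T a) = T b * (T a * B * star (T a)) * star (T b) := by
      simp only [← mul_assoc]
      rw [hT a b]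
      simp only [mul_assoc]
      rw [h2]
    rw [this]; abel

theorem applyDelta_perm {n : ℕ} (T : Fin n → H →L[ℂ] H) (hT : ∀ i j, T i * T j = T j * T i)
    {L L' : List (Fin n)} (h : L.Perm L') (A : H →L[ℂ] H) :
    applyDelta T L A = applyDelta T L' A :=
  haveI := applyDelta_leftComm T hT
  h.foldr_eq A

/-- If `X*X` and `Y*Y` have product zero then the initial spaces of `X` and `Y` are orthogonal,
that is, `X Y* = 0`. -/
theorem mul_star_eq_zero_of {E F : Type*} [NormedAddCommGroup E] [InnerProductSpace ℂ E]
    [CompleteSpace E] [NormedAddCommGroup F] [InnerProductSpace ℂ F]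
    [CompleteSpace F] (X Y : E →L[ℂ] F)
    (h : (adjoint X ∘L X) * (adjoint Y ∘L Y) = 0) : X ∘L adjoint Y = 0 := by
  have h1 : ∀ x, X (adjoint Y (Y x)) = 0 := fun x => by
    have : adjoint X (X (adjoint Y (Y x))) = 0 := DFunLike.congr_fun h x
    rw [← inner_self_eq_zero (𝕜 := ℂ), ← adjoint_inner_left, this, inner_zero_left]
  have h3 : (X ∘L adjoint Y) ∘L adjoint (X ∘L adjoint Y) = 0 := by
    ext x
    simp [adjoint_comp, h1]
  have h4 : ∀ x, adjoint (X ∘L adjoint Y) x = 0 := fun x => by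
    have := DFunLike.congr_fun h3 x
    rw [← inner_self_eq_zero (𝕜 := ℂ), adjoint_inner_left]
    rw [comp_apply] at this
    rw [this]; simp
  have h5 : adjoint (X ∘L adjoint Y) = 0 := by ext x; exact h4 x
  simpa using congrArg adjoint h5

/-! ### Positivity and monotonicity of the truncated defect operators -/

/-- Positivity of the truncated defect operators, given a coisometric extension `J Tᵢ* = Vᵢ* J` to
doubly commuting isometries and the Beurling condition. -/
theorem applyDelta_defect_nonneg_of_dilation {K : Type*} [NormedAddCommGroup K]
    [InnerProductSpace ℂ K] [CompleteSpace K] {n : ℕ} (T : Fin n → H →L[ℂ] H)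
    (V : Fin n → K →L[ℂ] K) (J : H →L[ℂ] K) (hJ : adjoint J ∘L J = 1)
    (hJT : ∀ i, J ∘L adjoint (T i) = adjoint (V i) ∘L J)
    (hiso : ∀ i, star (V i) * V i = 1) (hcomm : ∀ i j, V i * V j = V j * V i)
    (hdc : ∀ i j, i ≠ j → V i * star (V j) = star (V j) * V i)
    (hB : ∀ i j, i ≠ j → (1 - adjoint (T i) * T i) * (1 - adjoint (T j) * T j) = 0)
    (j : Fin n) (L : List (Fin n)) (hL : L.Nodup) (hj : j ∉ L) :
    0 ≤ applyDelta T L (1 - adjoint (T j) * T j) := by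
  have hJ' : ∀ x, adjoint J (J x) = x := fun x => DFunLike.congr_fun hJ x
  have hJT' : ∀ i, T i ∘L adjoint J = adjoint J ∘L V i := fun i => by
    simpa [adjoint_comp] using congrArg adjoint (hJT i)
  have hVJ : ∀ i x, adjoint (V i) (J x) = J (adjoint (T i) x) := fun i x =>
    (DFunLike.congr_fun (hJT i) x).symm
  have hJV : ∀ i x, adjoint J (V i x) = T i (adjoint J x) := fun i x =>
    (DFunLike.congr_fun (hJT' i) x).symm
  have hVV : ∀ i x, adjoint (V i) (V i x) = x := fun i x => DFunLike.congr_fun (hiso i) x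
  -- `S` is kept opaque, so that only its defining equation and its action are used below.
  obtain ⟨S, hSdef⟩ : ∃ S : K →L[ℂ] K, S = 1 - J ∘L adjoint J := ⟨_, rfl⟩
  have hSapp : ∀ x, S x = x - J (adjoint J x) := fun x => by simp [hSdef]
  have hS : IsStarProjection S := by
    rw [hSdef]
    refine IsStarProjection.one_sub ⟨?_, ?_⟩
    · ext x; simp [hJ']
    · rw [isSelfAdjoint_iff, star_eq_adjoint, adjoint_comp, adjoint_adjoint]
  have hSs : star S = S := hS.isSelfAdjoint
  have hSS : S * S = S := hS.isIdempotentElem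
  have hinv : ∀ i, S * (V i * S) = V i * S := fun i => by
    ext x
    simp [hSapp, hJV, hJ']
  have hinv' : ∀ i, S * star (V i) * S = S * star (V i) := fun i => by
    simpa [hSs, mul_assoc] using congrArg star (hinv i)
  have hX : ∀ i, adjoint (S ∘L V i ∘L J) ∘L (S ∘L V i ∘L J) = 1 - adjoint (T i) * T i := fun i => by
    have hSa : adjoint S = S := hSs
    ext x
    simp [adjoint_comp, hSa, hSapp, hJV, hJ', hVV, hVJ]
  -- The Beurling condition turns double commutation of the `Vᵢ` into that of the `Vᵢ S`.
  have hdc' : ∀ i j, i ≠ j → V i * S * star (V j * S) = star (V j * S) * (V i * S) := by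
    intro i j hij
    have h0 : (S ∘L V i ∘L J) ∘L adjoint (S ∘L V j ∘L J) = 0 :=
      mul_star_eq_zero_of _ _ (by rw [hX, hX, hB i j hij])
    have h1 : S * V i * (1 - S) * star (V j) * S = 0 := by
      rw [← h0, hSdef, sub_sub_cancel, ← hSdef, adjoint_comp, adjoint_comp, ← star_eq_adjoint S,
        hSs]
      rfl
    have h2 : S * V i * star (V j) * S = S * V i * S * star (V j) * S := by
      simpa [mul_sub, sub_mul, sub_eq_zero] using h1
    rw [star_mul, hSs]
    calc V i * S * (S * star (V j)) = V i * (S * S) * star (V j) := by simp only [mul_assoc]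
      _ = V i * S * star (V j) := by rw [hSS]
      _ = S * V i * S * star (V j) := by rw [mul_assoc S, hinv]
      _ = S * V i * (S * star (V j) * S) := by rw [hinv', mul_assoc (S * V i)]
      _ = S * V i * star (V j) * S := by rw [h2]; simp only [mul_assoc]
      _ = S * star (V j) * (V i * S) := by
        rw [mul_assoc S, hdc i j hij]; simp only [mul_assoc]
  have hZ : 1 - adjoint (T j) * T j
      = adjoint J ∘L (star (V j) * (S - V j * S * star (V j)) * V j) ∘L J := by
    ext x
    simp [star_eq_adjoint, hSapp, hJV, hJ', hVV, hVJ]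
  -- `applyDelta` folds from the right, so appending `j` applies `I − Δ_{V_j}` to `S` first.
  have hkey := (isStarProjection_applyDelta V S hS hiso hcomm hinv hdc' (L ++ [j])
    (List.nodup_append.2 ⟨hL, by simp, by
      rintro a ha b hb rfl
      exact hj (List.mem_singleton.1 hb ▸ ha)⟩)).1
  have happ : applyDelta V (L ++ [j]) S = applyDelta V L (S - V j * S * star (V j)) := by
    simp [applyDelta, star_eq_adjoint]
  rw [hZ, applyDelta_intertwine T V J hJT, applyDelta_conj V j _ L (fun k hk => hdc k j (by
    rintro rfl; exact hj hk)), ← happ, nonneg_iff_isPositive]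
  have hpos := IsPositive.of_isStarProjection hkey
  exact (hpos.adjoint_conj (V j)).adjoint_conj J

theorem truncDefectSq_antitone_of_nonneg {n : ℕ} (T : Fin n → H →L[ℂ] H)
    (hT : ∀ i j, T i * T j = T j * T i) (j : Fin n)
    (hpos : ∀ P : Finset (Fin n), j ∉ P → 0 ≤ truncDefectSq T j P)
    {P₁ P₂ : Finset (Fin n)} (hP : P₁ ⊆ P₂) (hP₂ : j ∉ P₂) :
    truncDefectSq T j P₂ ≤ truncDefectSq T j P₁ := by
  have hins : ∀ (k : Fin n) (P : Finset (Fin n)), k ∉ P → truncDefectSq T j (insert k P)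
      = truncDefectSq T j P - T k * truncDefectSq T j P * adjoint (T k) := by
    intro k P hk
    have hp : ((insert k P).sort (· ≤ ·)).Perm (k :: P.sort (· ≤ ·)) :=
      (Finset.sort_perm_toList _ _).trans ((Finset.toList_insert hk).trans
        ((Finset.sort_perm_toList _ _).symm.cons k))
    exact applyDelta_perm T hT hp _
  have hstep : ∀ s : Finset (Fin n), j ∉ P₁ ∪ s →
      truncDefectSq T j (P₁ ∪ s) ≤ truncDefectSq T j P₁ := by
    intro s
    induction s using Finset.induction_on with
    | empty => simp
    | insert k s hk ih =>
      intro hjs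
      rw [Finset.union_insert] at hjs ⊢
      have hjs' : j ∉ P₁ ∪ s := fun h => hjs (Finset.mem_insert_of_mem h)
      by_cases hkm : k ∈ P₁ ∪ s
      · rw [Finset.insert_eq_of_mem hkm]
        exact ih hjs'
      · refine le_trans ?_ (ih hjs')
        rw [hins k _ hkm, sub_le_self_iff, ← star_eq_adjoint]
        exact star_right_conjugate_nonneg (hpos _ hjs') (T k)
  simpa [Finset.union_eq_right.2 hP] using hstep P₂ (by rwa [Finset.union_eq_right.2 hP])

theorem le_of_mul_self_le {A B : H →L[ℂ] H} (hA : 0 ≤ A) (hB : 0 ≤ B) (h : A * A ≤ B * B) :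
    A ≤ B := by
  simpa [CFC.sqrt_mul_self A hA, CFC.sqrt_mul_self B hB] using CFC.sqrt_le_sqrt _ _ h

/-! ### The telescoping Szegő sum -/

universe u

/-- A commuting family in a ring comes from a commutative ring, so that `Finset.prod` identities
are available for it. -/
theorem exists_commRing_lift {A : Type u} {ι : Type*} [Ring A] (a : ι → A)
    (ha : ∀ i j, a i * a j = a j * a i) :
    ∃ (R : Type u) (_ : CommRing R) (φ : R →+* A) (r : ι → R), ∀ i, φ (r i) = a i := by
  open scoped IsMulCommutative in
  have := Subring.isMulCommutative_closure (s := Set.range a)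
    (by rintro _ ⟨i, rfl⟩ _ ⟨j, rfl⟩; exact ha i j)
  exact ⟨Subring.closure (Set.range a), inferInstance, Subring.subtype _,
    fun i => ⟨a i, Subring.subset_closure ⟨i, rfl⟩⟩, fun i => rfl⟩

section Telescoping

variable {n : ℕ} (T : Fin n → H →L[ℂ] H)

theorem map_prod_eq_list {R A : Type*} [CommRing R] [Ring A] (φ : R →+* A) (r : Fin n → R) :
    φ (∏ i, r i) = ((List.finRange n).map fun i => φ (r i)).prod := by
  rw [Fin.prod_univ_def, map_list_prod, List.map_map]
  rfl

theorem finPow_add_single (hT : ∀ i j, T i * T j = T j * T i) (i : Fin n) (k : Fin n → ℕ) :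
    finPow T (k + Pi.single i 1) = T i * finPow T k := by
  obtain ⟨R, _, φ, r, hr⟩ := exists_commRing_lift T hT
  have h : ∀ k : Fin n → ℕ, finPow T k = φ (∏ i, r i ^ k i) := fun k => by
    simp [map_prod_eq_list, hr, finPow]
  have h2 : ∏ l, r l ^ (k + Pi.single i 1 : Fin n → ℕ) l = r i * ∏ l, r l ^ k l := by
    simp only [Pi.add_apply, pow_add, Finset.prod_mul_distrib]
    rw [mul_comm]
    congr 1
    rw [Finset.prod_eq_single i] <;> simp +contextual
  rw [h, h, h2, map_mul, hr]

/-- The map `Δ_X : A ↦ X A X*`, as an element of the ring of linear endomorphisms of `B(H)`, so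
that `Δ_{XY} = Δ_X Δ_Y` and polynomial identities apply. -/
noncomputable def conjEnd (X : H →L[ℂ] H) : Module.End ℂ (H →L[ℂ] H) :=
  LinearMap.mulLeft ℂ X * LinearMap.mulRight ℂ (adjoint X)

theorem conjEnd_apply (X A : H →L[ℂ] H) : conjEnd X A = X * A * adjoint X := by
  simp [conjEnd, mul_assoc]

theorem conjEnd_one : conjEnd (1 : H →L[ℂ] H) = 1 := by
  ext1 A; simp [conjEnd_apply, ← star_eq_adjoint]

theorem conjEnd_mul (X Y : H →L[ℂ] H) : conjEnd (X * Y) = conjEnd X * conjEnd Y := by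
  ext1 A; simp [conjEnd_apply, ← star_eq_adjoint, mul_assoc]

theorem conjEnd_pow (X : H →L[ℂ] H) (m : ℕ) : conjEnd (X ^ m) = conjEnd X ^ m := by
  induction m with
  | zero => simp [conjEnd_one]
  | succ m ih => rw [pow_succ, pow_succ, conjEnd_mul, ih]

theorem conjEnd_finPow (k : Fin n → ℕ) :
    conjEnd (finPow T k) = ((List.finRange n).map fun i => conjEnd (T i) ^ k i).prod := by
  unfold finPow
  induction List.finRange n with
  | nil => simp [conjEnd_one]
  | cons i L ih => simp [conjEnd_mul, ih, conjEnd_pow]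

/-- The operator `(∏_{i ∈ L} (1 − Δ_{T i}^m))(I)`, the product taken in the order of the list. -/
noncomputable def boxDefect (L : List (Fin n)) (m : ℕ) : H →L[ℂ] H :=
  (L.map fun i => 1 - conjEnd (T i) ^ m).prod 1

/-- Telescoping: `𝕊ₙ⁻¹ = ∏ᵢ (1 − Δ_{Tᵢ})(I)`, and multiplying by the geometric sums
`∑_{a < m} Δ_{Tᵢ}^a` gives `∏ᵢ (1 − Δ_{Tᵢ}^m)(I)`. -/
theorem sum_box (hT : ∀ i j, T i * T j = T j * T i) (m : ℕ) :
    ∑ α ∈ Fintype.piFinset fun _ : Fin n => Finset.range m,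
      finPow T α * szegoInv T * adjoint (finPow T α) = boxDefect T (List.finRange n) m := by
  obtain ⟨R, _, φ, r, hr⟩ := exists_commRing_lift (fun i => conjEnd (T i))
    (fun i j => by rw [← conjEnd_mul, hT, conjEnd_mul])
  have hfin : ∀ k : Fin n → ℕ, φ (∏ i, r i ^ k i) = conjEnd (finPow T k) := fun k => by
    simp [map_prod_eq_list, hr, conjEnd_finPow]
  have hszego : φ (∏ i, (1 - r i)) 1 = szegoInv T := by
    have h1 : ∏ i, (1 - r i) = ∑ k : Fin n → Bool, (-1) ^ (∑ i, if k i then 1 else 0) *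
        ∏ i, r i ^ (if k i then 1 else 0) := by
      have : ∀ i, 1 - r i = ∑ b : Bool, (-1) ^ (if b then 1 else 0) * r i ^ (if b then 1 else 0) :=
        fun i => by simp; ring
      simp only [this]
      rw [Finset.prod_univ_sum, Fintype.piFinset_univ]
      refine Finset.sum_congr rfl fun k _ => ?_
      rw [Finset.prod_mul_distrib, Finset.prod_pow_eq_pow_sum]
    rw [h1, szegoInv]
    rw [map_sum, LinearMap.sum_apply]
    refine Finset.sum_congr rfl fun k _ => ?_
    generalize (∑ i, if k i then 1 else 0) = e
    have h2 := congrArg (· 1) (hfin fun i => if k i then 1 else 0)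
    rcases Nat.even_or_odd e with he | he
    · simpa only [he.neg_one_pow, one_mul, one_smul, conjEnd_apply, mul_one] using h2
    · simpa only [he.neg_one_pow, neg_mul, one_mul, map_neg, LinearMap.neg_apply, neg_smul,
        one_smul, conjEnd_apply, mul_one, neg_inj] using h2
  have hbox : φ (∏ i, (1 - r i ^ m)) 1 = boxDefect T (List.finRange n) m := by
    simp [map_prod_eq_list, hr, boxDefect]
  -- Expanding a product of sums, the box sum factors into one geometric sum per variable.
  have hgeom : (∑ α ∈ Fintype.piFinset fun _ : Fin n => Finset.range m, ∏ i, r i ^ α i)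
      * ∏ i, (1 - r i) = ∏ i, (1 - r i ^ m) := by
    rw [← Finset.prod_univ_sum, ← Finset.prod_mul_distrib]
    exact Finset.prod_congr rfl fun i _ => geom_sum_mul_neg _ _
  rw [← hbox, ← hgeom, ← hszego, map_mul, map_sum, Module.End.mul_apply, LinearMap.sum_apply]
  simp only [hfin, conjEnd_apply]

/-- Each factor `1 − Δ_{Tᵢ}^m` tends to the identity because `Tᵢ` is of class `C_{·0}`; the norm
bound `2 ^ |L|` controls the correction term `Tᵢ^m A_m Tᵢ^{*m}`. -/
theorem tendsto_boxDefect (hc : ∀ i, ‖T i‖ ≤ 1)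
    (hp : ∀ i (h : H), Tendsto (fun m : ℕ => (adjoint (T i) ^ m) h) atTop (𝓝 0))
    (L : List (Fin n)) (h : H) : Tendsto (fun m => boxDefect T L m h) atTop (𝓝 h) := by
  suffices hs : (∀ m, ‖boxDefect T L m‖ ≤ 2 ^ L.length) ∧
    ∀ h, Tendsto (fun m => boxDefect T L m h) atTop (𝓝 h) from hs.2 h
  induction L with
  | nil =>
    refine ⟨fun m => ?_, fun h => tendsto_const_nhds⟩
    exact norm_id_le
  | cons i L ih =>
    obtain ⟨hb, ht⟩ := ih
    have hcons : ∀ m, boxDefect T (i :: L) m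
        = boxDefect T L m - T i ^ m * boxDefect T L m * adjoint (T i) ^ m := fun m => by
      simp [boxDefect, ← conjEnd_pow, conjEnd_apply, ← star_eq_adjoint]
    have hpow : ∀ m, ‖T i ^ m‖ ≤ 1 := fun m => by
      induction m with
      | zero => exact norm_id_le
      | succ m ih =>
        rw [pow_succ]
        exact (norm_mul_le _ _).trans (mul_le_one₀ ih (norm_nonneg _) (hc i))
    have hpow' : ∀ m, ‖adjoint (T i) ^ m‖ ≤ 1 := fun m => by
      rw [← star_eq_adjoint, ← star_pow, norm_star]; exact hpow m
    have hC : (0 : ℝ) ≤ 2 ^ L.length := by positivity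
    have hTb : ∀ m, ‖T i ^ m * boxDefect T L m‖ ≤ 2 ^ L.length := fun m => by
      refine (norm_mul_le _ _).trans ?_
      simpa using mul_le_mul (hpow m) (hb m) (norm_nonneg _) zero_le_one
    refine ⟨fun m => ?_, fun h => ?_⟩
    · rw [hcons, List.length_cons, pow_succ, mul_two]
      refine (norm_sub_le _ _).trans (add_le_add (hb m) ?_)
      refine (norm_mul_le _ _).trans ?_
      simpa using mul_le_mul (hTb m) (hpow' m) (norm_nonneg _) hC
    · have h0 : Tendsto (fun m => (T i ^ m * boxDefect T L m) ((adjoint (T i) ^ m) h)) atTop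
          (𝓝 0) := by
        refine squeeze_zero_norm (fun m => le_of_opNorm_le _ (hTb m) _) ?_
        simpa using (hp i h).norm.const_mul (2 ^ L.length)
      simp only [hcons]
      simpa using (ht h).sub h0

/-- With `D*D = 𝕊ₙ⁻¹(T, T*)`, the map `h ↦ (D T^{*α} h)_α` into `ℓ²(ℕⁿ, H)` preserves norms: the
partial sums over boxes tend to `‖h‖²`. -/
theorem hasSum_norm_sq (hT : IsSzegoTuple T) (D : H →L[ℂ] H) (hD : szegoInv T = star D * D)
    (h : H) : HasSum (fun α : Fin n → ℕ => ‖D (adjoint (finPow T α) h)‖ ^ 2) (‖h‖ ^ 2) := by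
  set f := fun α : Fin n → ℕ => ‖D (adjoint (finPow T α) h)‖ ^ 2 with hf
  have hf0 : ∀ α, 0 ≤ f α := fun α => by positivity
  let box : ℕ → Finset (Fin n → ℕ) := fun m => Fintype.piFinset fun _ => Finset.range m
  have hmono : Monotone box := fun a b hab =>
    Fintype.piFinset_subset _ _ fun _ => Finset.range_subset_range.2 hab
  have hbox : Tendsto box atTop atTop := tendsto_atTop_finset_of_monotone hmono fun α => by
    refine ⟨∑ i, α i + 1, Fintype.mem_piFinset.2 fun i => Finset.mem_range.2 ?_⟩
    exact Nat.lt_succ_of_le (Finset.single_le_sum (fun _ _ => Nat.zero_le _) (Finset.mem_univ i))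
  have hsum : ∀ m, ∑ α ∈ box m, f α
      = RCLike.re (inner ℂ (boxDefect T (List.finRange n) m h) h) := fun m => by
    rw [← sum_box T hT.comm, hD]
    simp only [sum_apply, sum_inner, map_sum]
    refine Finset.sum_congr rfl fun α _ => ?_
    simp only [hf]
    rw [← inner_self_eq_norm_sq (𝕜 := ℂ)]
    simp only [star_eq_adjoint, mul_apply_eq_comp]
    rw [← adjoint_inner_left D, adjoint_inner_right]
  have hlim : Tendsto (fun m => ∑ α ∈ box m, f α) atTop (𝓝 (‖h‖ ^ 2)) := by
    simp only [hsum]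
    rw [← inner_self_eq_norm_sq (𝕜 := ℂ)]
    exact (RCLike.continuous_re.tendsto _).comp
      ((tendsto_boxDefect T hT.contraction hT.pure _ h).inner tendsto_const_nhds)
  have hmono' : Monotone fun m => ∑ α ∈ box m, f α := fun a b hab =>
    Finset.sum_le_sum_of_subset_of_nonneg (hmono hab) fun α _ _ => hf0 α
  have hs : Summable f := by
    refine summable_of_sum_le hf0 (c := ‖h‖ ^ 2) fun u => ?_
    obtain ⟨m, hm⟩ := (hbox.eventually (eventually_ge_atTop u)).exists
    exact (Finset.sum_le_sum_of_subset_of_nonneg hm fun α _ _ => hf0 α).trans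
      (hmono'.ge_of_tendsto hlim m)
  rw [← tendsto_nhds_unique (hs.hasSum.comp hbox) hlim]
  exact hs.hasSum

end Telescoping

/-! ### The dilation to shifts -/

section Dilation

theorem adjoint_comp_self_of_norm_map {E F : Type*} [NormedAddCommGroup E] [InnerProductSpace ℂ E]
    [CompleteSpace E] [NormedAddCommGroup F] [InnerProductSpace ℂ F] [CompleteSpace F]
    (U : E →ₗᵢ[ℂ] F) : adjoint U.toContinuousLinearMap ∘L U.toContinuousLinearMap = 1 :=
  (norm_map_iff_adjoint_comp_self _).1 U.norm_map

theorem lp_inner_single {ι E : Type*} [DecidableEq ι] [NormedAddCommGroup E]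
    [InnerProductSpace ℂ E] (i : ι) (h : E) (x : lp (fun _ : ι => E) 2) :
    inner ℂ (lp.single (E := fun _ : ι => E) 2 i h) x = inner ℂ h (x i) :=
  lp.inner_single_left (𝕜 := ℂ) (G := fun _ : ι => E) i h x

/-- An injection `f : ι → ι` induces an isometry `V` of `ℓ²(ι, E)` that carries the `i`-th
coordinate to the `f i`-th; its adjoint is `x ↦ x ∘ f`. -/
theorem exists_shift {ι E : Type*} [DecidableEq ι] [NormedAddCommGroup E]
    [InnerProductSpace ℂ E] [CompleteSpace E] (f : ι → ι) (hf : Function.Injective f) :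
    ∃ V : lp (fun _ : ι => E) 2 →L[ℂ] lp (fun _ : ι => E) 2,
      (∀ i h, V (lp.single 2 i h) = lp.single 2 (f i) h) ∧
      (∀ x i, adjoint V x i = x (f i)) ∧ star V * V = 1 := by
  have hV : OrthogonalFamily ℂ (fun _ : ι => E) (fun i =>
      (⟨lp.lsingle (𝕜 := ℂ) (E := fun _ : ι => E) 2 (f i),
        fun x => lp.norm_single (by norm_num) _ _⟩ : E →ₗᵢ[ℂ] lp (fun _ : ι => E) 2)) := by
    intro i j hij v w
    change inner ℂ (lp.single (E := fun _ : ι => E) 2 (f i) v)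
      (lp.single (E := fun _ : ι => E) 2 (f j) w) = (0 : ℂ)
    rw [lp_inner_single, lp.single_apply_ne _ _ _ (fun h => hij (hf h)), inner_zero_right]
  obtain ⟨U, hU⟩ : ∃ U : lp (fun _ : ι => E) 2 →ₗᵢ[ℂ] lp (fun _ : ι => E) 2,
      ∀ i h, U (lp.single 2 i h) = lp.single 2 (f i) h :=
    ⟨hV.linearIsometry, fun i h => hV.linearIsometry_apply_single h⟩
  refine ⟨U.toContinuousLinearMap, hU, fun x i => ?_, adjoint_comp_self_of_norm_map U⟩
  refine ext_inner_left ℂ fun h => ?_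
  rw [← lp_inner_single i h, adjoint_inner_right, ← lp_inner_single (f i) h x, ← hU]
  rfl

variable {n : ℕ}

/-- The canonical isometry `J h = (D T^{*α} h)_α` of a Szegő tuple into `ℓ²(ℕⁿ, H)`. -/
theorem exists_poisson (T : Fin n → H →L[ℂ] H) (hT : IsSzegoTuple T) :
    ∃ (D : H →L[ℂ] H) (J : H →L[ℂ] lp (fun _ : Fin n → ℕ => H) 2),
      (∀ h α, J h α = D (adjoint (finPow T α) h)) ∧ adjoint J ∘L J = 1 := by
  obtain ⟨D, hD⟩ := CStarAlgebra.nonneg_iff_eq_star_mul_self.1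
    ((nonneg_iff_isPositive _).2 hT.pos)
  have h2 : (2 : ENNReal).toReal = (2 : ℕ) := by norm_num
  have hmem : ∀ h, Memℓp (fun α : Fin n → ℕ => D (adjoint (finPow T α) h)) 2 := fun h => by
    refine memℓp_gen ?_
    simpa only [h2, Real.rpow_natCast] using (hasSum_norm_sq T hT D hD h).summable
  let J₀ : H →ₗ[ℂ] lp (fun _ : Fin n → ℕ => H) 2 :=
    { toFun := fun h => ⟨_, hmem h⟩
      map_add' := fun x y => lp.ext <| funext fun α => by
        change D (adjoint (finPow T α) (x + y)) = D (adjoint (finPow T α) x) + D _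
        rw [map_add, map_add]
      map_smul' := fun c x => lp.ext <| funext fun α => by
        change D (adjoint (finPow T α) (c • x)) = c • D (adjoint (finPow T α) x)
        rw [map_smul, map_smul] }
  have hJ : ∀ h α, J₀ h α = D (adjoint (finPow T α) h) := fun h α => rfl
  have hnorm : ∀ h, ‖J₀ h‖ = ‖h‖ := fun h => by
    have h3 := lp.hasSum_norm (p := 2) (by norm_num) (J₀ h)
    simp only [h2, Real.rpow_natCast, hJ] at h3
    exact (sq_eq_sq₀ (norm_nonneg _) (norm_nonneg _)).1
      (h3.unique (hasSum_norm_sq T hT D hD h))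
  exact ⟨D, (⟨J₀, hnorm⟩ : H →ₗᵢ[ℂ] _).toContinuousLinearMap, hJ,
    adjoint_comp_self_of_norm_map _⟩

/-- The coordinate shifts on `ℓ²(ℕⁿ, E)` are doubly commuting isometries. -/
theorem exists_shifts (n : ℕ) (E : Type*) [NormedAddCommGroup E] [InnerProductSpace ℂ E]
    [CompleteSpace E] :
    ∃ V : Fin n → lp (fun _ : Fin n → ℕ => E) 2 →L[ℂ] lp (fun _ : Fin n → ℕ => E) 2,
      (∀ i x α, adjoint (V i) x α = x (α + Pi.single i 1)) ∧
      (∀ i, star (V i) * V i = 1) ∧ (∀ i j, V i * V j = V j * V i) ∧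
      (∀ i j, i ≠ j → V i * star (V j) = star (V j) * V i) := by
  choose V hVs hVa hVi using fun i : Fin n =>
    exists_shift (E := E) (fun α : Fin n → ℕ => α + Pi.single i 1) (add_left_injective _)
  have hext : ∀ A B : lp (fun _ : Fin n → ℕ => E) 2 →L[ℂ] lp (fun _ : Fin n → ℕ => E) 2,
      (∀ α h, A (lp.single 2 α h) = B (lp.single 2 α h)) → A = B := fun A B hAB =>
    lp.ext_continuousLinearMap (by norm_num) fun α => ContinuousLinearMap.ext fun h => hAB α h
  have hs : ∀ j β h, star (V j) (lp.single 2 (β + Pi.single j 1) h) = lp.single 2 β h :=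
    fun j β h => by
      rw [← hVs]
      exact DFunLike.congr_fun (hVi j) _
  have hz : ∀ j (β : Fin n → ℕ) h, β j = 0 → star (V j) (lp.single 2 β h) = 0 :=
    fun j β h hβ => lp.ext <| funext fun γ => by
      rw [star_eq_adjoint, hVa, lp.single_apply_ne]
      · rfl
      · intro he
        have := congrFun he j
        simp [hβ] at this
  refine ⟨V, hVa, hVi, fun i j => hext _ _ fun α h => ?_, fun i j hij => hext _ _ fun α h => ?_⟩
  · rw [mul_apply_eq_comp, mul_apply_eq_comp, hVs, hVs, hVs, hVs, add_right_comm]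
  · rw [mul_apply_eq_comp, mul_apply_eq_comp, hVs]
    -- If `α j = 0`, both sides vanish; otherwise `Vⱼ*` lowers the `j`-th exponent.
    rcases Nat.eq_zero_or_pos (α j) with h0 | h0
    · rw [hz j α h h0, hz j _ h (by simp [h0, hij.symm]), map_zero]
    · obtain ⟨β, rfl⟩ : ∃ β, α = β + Pi.single j 1 := by
        refine ⟨α - Pi.single j 1, (tsub_add_cancel_of_le fun l => ?_).symm⟩
        rcases eq_or_ne l j with rfl | hl
        · simpa using Nat.succ_le_of_lt h0
        · simp [hl]
      rw [hs, hVs, add_right_comm, hs]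

/-- A Szegő tuple is the compression of doubly commuting shifts to a subspace invariant under
their adjoints. -/
theorem exists_dilation (T : Fin n → H →L[ℂ] H) (hT : IsSzegoTuple T) :
    ∃ (V : Fin n → lp (fun _ : Fin n → ℕ => H) 2 →L[ℂ] lp (fun _ : Fin n → ℕ => H) 2)
      (J : H →L[ℂ] lp (fun _ : Fin n → ℕ => H) 2),
      adjoint J ∘L J = 1 ∧ (∀ i, J ∘L adjoint (T i) = adjoint (V i) ∘L J) ∧
      (∀ i, star (V i) * V i = 1) ∧ (∀ i j, V i * V j = V j * V i) ∧
      (∀ i j, i ≠ j → V i * star (V j) = star (V j) * V i) := by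
  obtain ⟨D, J, hJ, hJJ⟩ := exists_poisson T hT
  obtain ⟨V, hVa, hV⟩ := exists_shifts n H
  refine ⟨V, J, hJJ, fun i => ContinuousLinearMap.ext fun h => lp.ext <| funext fun α => ?_, hV⟩
  rw [comp_apply, comp_apply, hVa, hJ, hJ, finPow_add_single T hT.comm, ← star_eq_adjoint (_ * _),
    star_mul]
  rfl

end Dilation

/-! ### Monotonicity for Beurling tuples -/

/-- For a Beurling tuple `T`, `j`, and `P₁ ⊆ P₂ ⊆ {1,…,n} \ {j}`, one has
`D²_{j,T,P₂} ≤ D²_{j,T,P₁}`, and hence the positive square roots satisfy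
`D_{j,T,P₂} ≤ D_{j,T,P₁}`. -/
theorem beurling_truncDefectSq_antitone {n : ℕ} (hn : 0 < n) (T : Fin n → H →L[ℂ] H)
    (hT : IsBeurlingTuple T) (j : Fin n) (P₁ P₂ : Finset (Fin n)) (hP : P₁ ⊆ P₂)
    (hP₂ : j ∉ P₂) :
    (truncDefectSq T j P₁ - truncDefectSq T j P₂).IsPositive ∧
    ∀ D₁ D₂ : H →L[ℂ] H, D₁.IsPositive → D₁ * D₁ = truncDefectSq T j P₁ →
      D₂.IsPositive → D₂ * D₂ = truncDefectSq T j P₂ → (D₁ - D₂).IsPositive := by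
  obtain ⟨V, J, hJ, hJT, hiso, hcomm, hdc⟩ := exists_dilation T hT.1
  have hpos : ∀ P : Finset (Fin n), j ∉ P → 0 ≤ truncDefectSq T j P := fun P hj =>
    applyDelta_defect_nonneg_of_dilation T V J hJ hJT hiso hcomm hdc hT.2 j _
      (P.sort_nodup _) (by simpa using hj)
  have hle := truncDefectSq_antitone_of_nonneg T hT.1.comm j hpos hP hP₂
  refine ⟨hle, fun D₁ D₂ h₁ e₁ h₂ e₂ => ?_⟩
  exact le_of_mul_self_le ((nonneg_iff_isPositive _).2 h₂) ((nonneg_iff_isPositive _).2 h₁)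
    (by rwa [e₁, e₂])
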